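/- Under the wide-range Hedge setup, suppose the sequence (p^t)_{t=1}^T is consistent with wide-range Hedge, i.e. for every t ∈ {1,…,T} the stationarity equation ∑_{(b,ψ)∈ℐ} w^{t−1}(b,ψ)·S^t_b·p^t = ∑_{(b,ψ)∈ℐ} w^{t−1}(b,ψ)·S^t_b·(ψ∘p^t) holds as an equality of vectors in ℝ^A. Then for every b ∈ B^e and every action a ∈ 𝒜 (equivalently every constant map ψ ∈ Ψ^e, for which ⟨ψ∘p, ℓ⟩ = ℓ(a)), ∑_{t=1}^T S^t_b·(⟨p^t, ℓ^t⟩ − ℓ^t(a)) ≤ η·∑_{t=1}^T ‖ℓ^t‖_∞·S^t_b·⟨p^t, ℓ^t⟩ + log((|B^s| + |B^e|)·A)/η. -/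

import Mathlib

/-!
Potential argument: the potential is the total weight `∑ i ∈ I, w t i`. On `[0, L]` the exponential
lies below its chord, and the discount `exp (-η L)` makes the chords for the learner's loss and for
the expert's loss have opposite slopes `± c`. One weight update is therefore at most
`1 + c s (x - y)` with the same `c ≥ 0` for all experts, and stationarity cancels the linear
terms, so the potential never increases. A single weight at time `T` is thus at most the total prior
mass; taking logarithms and using `1 - exp (-η L) ≤ η L` turns this into the regret bound. The prior
`A ^ A` on external and `A` on swap indices gives each index `b` the same total mass `A * A ^ A`.
-/

open Finset

/-- Pushforward of a vector `p` on `Fin A` under a map `ψ : Fin A → Fin A`: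
`(ψ∘p)(a) = ∑_{a' : ψ(a') = a} p(a')`. -/
def pushf {A : ℕ} (ψ : Fin A → Fin A) (p : Fin A → ℝ) : Fin A → ℝ :=
  fun a => ∑ a' ∈ Finset.univ.filter (fun a' => ψ a' = a), p a'

/-- Standard inner product on `ℝ^A`. -/
def ip {A : ℕ} (p ℓ : Fin A → ℝ) : ℝ := ∑ a, p a * ℓ a

/-- Sup norm `‖ℓ‖_∞ = max_a ℓ(a)` (for nonempty `Fin A`). -/
noncomputable def supNorm {A : ℕ} (ℓ : Fin A → ℝ) : ℝ := sSup (Set.range ℓ)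

/-- The set `Ψ^e` of external (constant) modifications on `Fin A`. -/
def PsiE (A : ℕ) : Finset (Fin A → Fin A) :=
  Finset.univ.image fun a => Function.const (Fin A) a

/-- The absolute slope of the affine bounds on `[0, L]` for the two factors of a weight update, one
from the learner's loss and one from the expert's. At `L = 0` it has the junk value `0`, for which
the bounds still hold. -/
noncomputable def lossSlope (η L : ℝ) : ℝ := (1 - Real.exp (-η * L)) / L

lemma lossSlope_nonneg {η L : ℝ} (hη : 0 ≤ η) (hL : 0 ≤ L) : 0 ≤ lossSlope η L := by
  have hexp : Real.exp (-η * L) ≤ 1 := Real.exp_le_one_iff.2 (by nlinarith)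
  exact div_nonneg (sub_nonneg.2 hexp) hL

lemma exp_mul_le_chord (k : ℝ) {L u : ℝ} (hu : u ∈ Set.Icc 0 L) :
    Real.exp (k * u) ≤ 1 + (Real.exp (k * L) - 1) / L * u := by
  obtain ⟨hu0, huL⟩ := hu
  rcases (hu0.trans huL).eq_or_lt with hL | hL
  · have hu_zero : u = 0 := by linarith
    simp [hu_zero]
  · have hconv := convexOn_exp.2 (Set.mem_univ 0) (Set.mem_univ (k * L))
      (sub_nonneg.2 ((div_le_one hL).2 huL)) (div_nonneg hu0 hL.le) (sub_add_cancel 1 (u / L))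
    have harg : (1 - u / L) * 0 + u / L * (k * L) = k * u := by
      field_simp
      ring
    calc Real.exp (k * u)
        ≤ (1 - u / L) * Real.exp 0 + u / L * Real.exp (k * L) := by
          simpa only [smul_eq_mul, harg] using hconv
      _ = 1 + (Real.exp (k * L) - 1) / L * u := by rw [Real.exp_zero]; ring

lemma exp_neg_mul_le (η : ℝ) {L u : ℝ} (hu : u ∈ Set.Icc 0 L) :
    Real.exp (-η * u) ≤ 1 - lossSlope η L * u := by
  calc Real.exp (-η * u) ≤ 1 + (Real.exp (-η * L) - 1) / L * u := exp_mul_le_chord (-η) hu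
    _ = 1 - lossSlope η L * u := by rw [lossSlope]; ring

lemma exp_discounted_mul_le {η L u : ℝ} (hη : 0 ≤ η) (hu : u ∈ Set.Icc 0 L) :
    Real.exp (η * (Real.exp (-η * L) * u)) ≤ 1 + lossSlope η L * u := by
  have hL : 0 ≤ L := hu.1.trans hu.2
  have hdisc : Real.exp (-η * L) ≤ 1 := Real.exp_le_one_iff.2 (by nlinarith)
  have hmem : Real.exp (-η * L) * u ∈ Set.Icc 0 L :=
    ⟨mul_nonneg (Real.exp_pos _).le hu.1, (mul_le_of_le_one_left hu.1 hdisc).trans hu.2⟩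
  have hcancel : Real.exp (η * L) * Real.exp (-η * L) = 1 := by
    rw [neg_mul, ← Real.exp_add, add_neg_cancel, Real.exp_zero]
  calc Real.exp (η * (Real.exp (-η * L) * u))
      ≤ 1 + (Real.exp (η * L) - 1) / L * (Real.exp (-η * L) * u) := exp_mul_le_chord η hmem
    _ = 1 + (Real.exp (η * L) * Real.exp (-η * L) - Real.exp (-η * L)) / L * u := by ring
    _ = 1 + lossSlope η L * u := by rw [hcancel, lossSlope]

lemma exp_discounted_regret_le {η L x y s : ℝ} (hη : 0 ≤ η) (hx : x ∈ Set.Icc 0 L)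
    (hy : y ∈ Set.Icc 0 L) (hs : s ∈ Set.Icc 0 1) :
    Real.exp (η * (Real.exp (-η * L) * s * x - s * y))
      ≤ 1 + lossSlope η L * (s * (x - y)) := by
  have hscale {u : ℝ} (hu : u ∈ Set.Icc 0 L) : s * u ∈ Set.Icc 0 L :=
    ⟨mul_nonneg hs.1 hu.1, (mul_le_of_le_one_left hu.1 hs.2).trans hu.2⟩
  have hc : 0 ≤ lossSlope η L := lossSlope_nonneg hη (hx.1.trans hx.2)
  have hcx : 0 ≤ lossSlope η L * (s * x) := mul_nonneg hc (hscale hx).1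
  have hcy : 0 ≤ lossSlope η L * (s * y) := mul_nonneg hc (hscale hy).1
  calc Real.exp (η * (Real.exp (-η * L) * s * x - s * y))
      = Real.exp (η * (Real.exp (-η * L) * (s * x))) * Real.exp (-η * (s * y)) := by
        rw [← Real.exp_add]; ring_nf
    _ ≤ (1 + lossSlope η L * (s * x)) * (1 - lossSlope η L * (s * y)) :=
        mul_le_mul (exp_discounted_mul_le hη (hscale hx)) (exp_neg_mul_le η (hscale hy))
          (Real.exp_pos _).le (by positivity)
    _ ≤ 1 + lossSlope η L * (s * (x - y)) := by linarith [mul_nonneg hcx hcy]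

lemma regret_le_discounted_regret_add {x s : ℝ} (η L y : ℝ) (hx : 0 ≤ x) (hs : 0 ≤ s) :
    s * (x - y) ≤ η * (L * s * x) + (Real.exp (-η * L) * s * x - s * y) := by
  have hdisc : 1 ≤ η * L + Real.exp (-η * L) := by linarith [Real.add_one_le_exp (-η * L)]
  linarith [mul_le_mul_of_nonneg_right hdisc (mul_nonneg hs hx)]

section Hedge

variable {ι : Type*} {η : ℝ} {π : ι → ℝ} {L x : ℕ → ℝ} {s y : ℕ → ι → ℝ} {I : Finset ι} {T t : ℕ}
  {i : ι}

/-- The exponential weight of expert `i` after round `t` of Hedge with time selection: `π` is the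
prior, `x τ` and `y τ i` are the losses of the learner and of expert `i` in round `τ`, `L τ` bounds
these losses, and `s τ i` is the degree to which expert `i` is active. Rounds are numbered
from `1`. -/
noncomputable def hedgeWeight (η : ℝ) (π : ι → ℝ) (L x : ℕ → ℝ) (s y : ℕ → ι → ℝ) (t : ℕ) (i : ι) :
    ℝ :=
  π i * Real.exp (η * ∑ τ ∈ Icc 1 t, (Real.exp (-η * L τ) * s τ i * x τ - s τ i * y τ i))

lemma hedgeWeight_zero : hedgeWeight η π L x s y 0 i = π i := by
  simp [hedgeWeight]

lemma hedgeWeight_succ :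
    hedgeWeight η π L x s y (t + 1) i = hedgeWeight η π L x s y t i *
      Real.exp (η * (Real.exp (-η * L (t + 1)) * s (t + 1) i * x (t + 1)
        - s (t + 1) i * y (t + 1) i)) := by
  rw [hedgeWeight, hedgeWeight, sum_Icc_succ_top (Nat.le_add_left 1 t), mul_add, Real.exp_add,
    ← mul_assoc]

lemma hedgeWeight_nonneg (hπ : 0 ≤ π i) : 0 ≤ hedgeWeight η π L x s y t i :=
  mul_nonneg hπ (Real.exp_pos _).le

lemma sum_hedgeWeight_succ_le (hη : 0 ≤ η) (hπ : ∀ i ∈ I, 0 ≤ π i)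
    (hx : x (t + 1) ∈ Set.Icc 0 (L (t + 1)))
    (hy : ∀ i ∈ I, y (t + 1) i ∈ Set.Icc 0 (L (t + 1)))
    (hs : ∀ i ∈ I, s (t + 1) i ∈ Set.Icc 0 1)
    (hstat : ∑ i ∈ I, hedgeWeight η π L x s y t i * s (t + 1) i * (x (t + 1) - y (t + 1) i) ≤ 0) :
    ∑ i ∈ I, hedgeWeight η π L x s y (t + 1) i ≤ ∑ i ∈ I, hedgeWeight η π L x s y t i := by
  set w := hedgeWeight η π L x s y
  set c := lossSlope η (L (t + 1))
  have hc : 0 ≤ c := lossSlope_nonneg hη (hx.1.trans hx.2)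
  have hupdate : ∀ i ∈ I,
      w (t + 1) i ≤ w t i + c * (w t i * s (t + 1) i * (x (t + 1) - y (t + 1) i)) := by
    intro i hi
    calc w (t + 1) i
        ≤ w t i * (1 + c * (s (t + 1) i * (x (t + 1) - y (t + 1) i))) :=
          hedgeWeight_succ.trans_le (mul_le_mul_of_nonneg_left
            (exp_discounted_regret_le hη hx (hy i hi) (hs i hi)) (hedgeWeight_nonneg (hπ i hi)))
      _ = w t i + c * (w t i * s (t + 1) i * (x (t + 1) - y (t + 1) i)) := by ring
  calc ∑ i ∈ I, w (t + 1) i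
      ≤ ∑ i ∈ I, (w t i + c * (w t i * s (t + 1) i * (x (t + 1) - y (t + 1) i))) :=
        sum_le_sum hupdate
    _ = ∑ i ∈ I, w t i + c * ∑ i ∈ I, w t i * s (t + 1) i * (x (t + 1) - y (t + 1) i) := by
        rw [sum_add_distrib, mul_sum]
    _ ≤ ∑ i ∈ I, w t i := add_le_of_nonpos_right (mul_nonpos_of_nonneg_of_nonpos hc hstat)

lemma sum_hedgeWeight_le_sum_prior (hη : 0 ≤ η) (hπ : ∀ i ∈ I, 0 ≤ π i)
    (hx : ∀ t ∈ Icc 1 T, x t ∈ Set.Icc 0 (L t))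
    (hy : ∀ t ∈ Icc 1 T, ∀ i ∈ I, y t i ∈ Set.Icc 0 (L t))
    (hs : ∀ t ∈ Icc 1 T, ∀ i ∈ I, s t i ∈ Set.Icc 0 1)
    (hstat : ∀ t ∈ Icc 1 T,
      ∑ i ∈ I, hedgeWeight η π L x s y (t - 1) i * s t i * (x t - y t i) ≤ 0) :
    ∑ i ∈ I, hedgeWeight η π L x s y T i ≤ ∑ i ∈ I, π i := by
  induction T with
  | zero => simp only [hedgeWeight_zero, le_refl]
  | succ T ih =>
    have hlast : T + 1 ∈ Icc 1 (T + 1) := right_mem_Icc.2 (Nat.le_add_left 1 T)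
    have hsub : Icc 1 T ⊆ Icc 1 (T + 1) := Icc_subset_Icc_right T.le_succ
    calc ∑ i ∈ I, hedgeWeight η π L x s y (T + 1) i
        ≤ ∑ i ∈ I, hedgeWeight η π L x s y T i :=
          sum_hedgeWeight_succ_le hη hπ (hx _ hlast) (hy _ hlast) (hs _ hlast)
            (by simpa only [Nat.add_sub_cancel] using hstat _ hlast)
      _ ≤ ∑ i ∈ I, π i :=
          ih (fun t ht => hx t (hsub ht)) (fun t ht => hy t (hsub ht))
            (fun t ht => hs t (hsub ht)) (fun t ht => hstat t (hsub ht))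

lemma sum_discounted_regret_le_of_hedgeWeight_le {W : ℝ} (hη : 0 < η) (hπ : 0 < π i)
    (hW : hedgeWeight η π L x s y T i ≤ W) :
    ∑ t ∈ Icc 1 T, (Real.exp (-η * L t) * s t i * x t - s t i * y t i)
      ≤ Real.log (W / π i) / η := by
  have hexp : Real.exp (η * ∑ t ∈ Icc 1 T, (Real.exp (-η * L t) * s t i * x t - s t i * y t i))
      ≤ W / π i := (le_div_iff₀' hπ).2 hW
  exact (le_div_iff₀' hη).2 ((Real.le_log_iff_exp_le ((Real.exp_pos _).trans_le hexp)).2 hexp)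

theorem sum_regret_le_of_stationary (hη : 0 < η) (hπ : ∀ i ∈ I, 0 < π i)
    (hx : ∀ t ∈ Icc 1 T, x t ∈ Set.Icc 0 (L t))
    (hy : ∀ t ∈ Icc 1 T, ∀ i ∈ I, y t i ∈ Set.Icc 0 (L t))
    (hs : ∀ t ∈ Icc 1 T, ∀ i ∈ I, s t i ∈ Set.Icc 0 1)
    (hstat : ∀ t ∈ Icc 1 T,
      ∑ i ∈ I, hedgeWeight η π L x s y (t - 1) i * s t i * (x t - y t i) ≤ 0)
    (hi : i ∈ I) :
    ∑ t ∈ Icc 1 T, s t i * (x t - y t i)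
      ≤ η * ∑ t ∈ Icc 1 T, L t * s t i * x t + Real.log ((∑ j ∈ I, π j) / π i) / η := by
  have hπ0 : ∀ j ∈ I, 0 ≤ π j := fun j hj => (hπ j hj).le
  have hweight : hedgeWeight η π L x s y T i ≤ ∑ j ∈ I, π j :=
    (single_le_sum (fun j hj => hedgeWeight_nonneg (hπ0 j hj)) hi).trans
      (sum_hedgeWeight_le_sum_prior hη.le hπ0 hx hy hs hstat)
  calc ∑ t ∈ Icc 1 T, s t i * (x t - y t i)
      ≤ ∑ t ∈ Icc 1 T,
          (η * (L t * s t i * x t) + (Real.exp (-η * L t) * s t i * x t - s t i * y t i)) :=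
        sum_le_sum fun t ht => regret_le_discounted_regret_add η _ _ (hx t ht).1 (hs t ht i hi).1
    _ = η * ∑ t ∈ Icc 1 T, L t * s t i * x t
          + ∑ t ∈ Icc 1 T, (Real.exp (-η * L t) * s t i * x t - s t i * y t i) := by
        rw [sum_add_distrib, mul_sum]
    _ ≤ η * ∑ t ∈ Icc 1 T, L t * s t i * x t + Real.log ((∑ j ∈ I, π j) / π i) / η := by
        gcongr
        exact sum_discounted_regret_le_of_hedgeWeight_le hη (hπ i hi) hweight

end Hedge

section Modifications

variable {A : ℕ}

lemma le_supNorm (ℓ : Fin A → ℝ) (a : Fin A) : ℓ a ≤ supNorm ℓ :=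
  le_csSup (Set.finite_range ℓ).bddAbove ⟨a, rfl⟩

lemma ip_mem_Icc_supNorm {p ℓ : Fin A → ℝ} (hp : p ∈ stdSimplex ℝ (Fin A)) {m : ℝ}
    (hℓ : ∀ a, m ≤ ℓ a) : ip p ℓ ∈ Set.Icc m (supNorm ℓ) :=
  (convex_Icc m (supNorm ℓ)).sum_mem (fun a _ => hp.1 a) hp.2 fun a _ => ⟨hℓ a, le_supNorm ℓ a⟩

lemma pushf_mem_stdSimplex (ψ : Fin A → Fin A) {p : Fin A → ℝ} (hp : p ∈ stdSimplex ℝ (Fin A)) :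
    pushf ψ p ∈ stdSimplex ℝ (Fin A) :=
  ⟨fun _ => sum_nonneg fun a' _ => hp.1 a', (sum_fiberwise univ ψ p).trans hp.2⟩

lemma pushf_const (a : Fin A) {p : Fin A → ℝ} (hp : ∑ a', p a' = 1) :
    pushf (Function.const (Fin A) a) p = Pi.single a 1 := by
  ext a'
  rcases eq_or_ne a a' with rfl | h
  · simp [pushf, hp]
  · simp [pushf, h, h.symm]

lemma ip_pushf_const (a : Fin A) {p : Fin A → ℝ} (hp : ∑ a', p a' = 1) (ℓ : Fin A → ℝ) :
    ip (pushf (Function.const (Fin A) a) p) ℓ = ℓ a := by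
  rw [pushf_const a hp]
  exact single_one_dotProduct a ℓ

lemma sum_mul_ip {ι : Type*} (I : Finset ι) (c : ι → ℝ) (q : ι → Fin A → ℝ) (ℓ : Fin A → ℝ) :
    ∑ i ∈ I, c i * ip (q i) ℓ = ip (fun a => ∑ i ∈ I, c i * q i a) ℓ := by
  simp only [ip, mul_sum, sum_mul, mul_assoc]
  exact sum_comm

lemma sum_mul_ip_sub_ip_eq_zero {ι : Type*} {I : Finset ι} {c : ι → ℝ} {q r : ι → Fin A → ℝ}
    (h : ∀ a, ∑ i ∈ I, c i * q i a = ∑ i ∈ I, c i * r i a) (ℓ : Fin A → ℝ) :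
    ∑ i ∈ I, c i * (ip (q i) ℓ - ip (r i) ℓ) = 0 := by
  simp only [mul_sub, sum_sub_distrib, sum_mul_ip, h, sub_self]

lemma card_PsiE : #(PsiE A) = A := by
  rw [PsiE, card_image_of_injective _ fun a _ h => congrFun h a, card_univ, Fintype.card_fin]

end Modifications

section WideRange

variable {A : ℕ} {B : Type*} [DecidableEq B] {Bs Be : Finset B} {b : B}

/-- The index set `(B^s × Ψ^s) ∪ (B^e × Ψ^e)` of wide-range Hedge on `A` actions. -/
def wideRangeIndex (A : ℕ) (Bs Be : Finset B) : Finset (B × (Fin A → Fin A)) :=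
  Bs ×ˢ univ ∪ Be ×ˢ PsiE A

/-- The prior weight `w⁰(b, ψ)` of wide-range Hedge on `A` actions, which does not depend on `ψ`. -/
def wideRangePrior (A : ℕ) (Be : Finset B) (b : B) : ℝ := if b ∈ Be then (A : ℝ) ^ A else A

lemma fst_mem_of_mem_wideRangeIndex {bψ : B × (Fin A → Fin A)} (h : bψ ∈ wideRangeIndex A Bs Be) :
    bψ.1 ∈ Bs ∪ Be :=
  mem_union.2 ((mem_union.1 h).imp (fun h => (mem_product.1 h).1) fun h => (mem_product.1 h).1)

lemma mk_const_mem_wideRangeIndex (Bs : Finset B) (hb : b ∈ Be) (a : Fin A) :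
    (b, Function.const (Fin A) a) ∈ wideRangeIndex A Bs Be :=
  mem_union_right _ (mk_mem_product hb (mem_image_of_mem _ (mem_univ a)))

lemma wideRangePrior_pos (hA : 0 < A) (Be : Finset B) (b : B) : 0 < wideRangePrior A Be b := by
  unfold wideRangePrior
  split_ifs <;> positivity

lemma sum_wideRangePrior (hdisj : Disjoint Bs Be) :
    ∑ bψ ∈ wideRangeIndex A Bs Be, wideRangePrior A Be bψ.1
      = ((#Bs : ℝ) + #Be) * A * (A : ℝ) ^ A := by
  have hswap : ∀ b ∈ Bs, (A : ℝ) ^ A * wideRangePrior A Be b = A * (A : ℝ) ^ A := fun b hb => by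
    rw [wideRangePrior, if_neg (disjoint_left.1 hdisj hb), mul_comm]
  have hext : ∀ b ∈ Be, (A : ℝ) * wideRangePrior A Be b = A * (A : ℝ) ^ A := fun b hb => by
    rw [wideRangePrior, if_pos hb]
  calc ∑ bψ ∈ wideRangeIndex A Bs Be, wideRangePrior A Be bψ.1
      = ∑ b ∈ Bs, (A : ℝ) ^ A * wideRangePrior A Be b
          + ∑ b ∈ Be, (A : ℝ) * wideRangePrior A Be b := by
        rw [wideRangeIndex, sum_union (disjoint_product.2 (Or.inl hdisj)), sum_product, sum_product]
        simp only [sum_const, card_univ, Fintype.card_fun, Fintype.card_fin, card_PsiE,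
          nsmul_eq_mul, Nat.cast_pow]
    _ = #Bs * (A * (A : ℝ) ^ A) + #Be * (A * (A : ℝ) ^ A) := by
        simp only [sum_congr rfl hswap, sum_congr rfl hext, sum_const, nsmul_eq_mul]
    _ = ((#Bs : ℝ) + #Be) * A * (A : ℝ) ^ A := by ring

lemma sum_wideRangePrior_div (hdisj : Disjoint Bs Be) (hb : b ∈ Be) :
    (∑ bψ ∈ wideRangeIndex A Bs Be, wideRangePrior A Be bψ.1) / wideRangePrior A Be b
      = ((#Bs : ℝ) + #Be) * A := by
  have hne : (A : ℝ) ^ A ≠ 0 := by exact_mod_cast Nat.pow_self_pos.ne'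
  rw [sum_wideRangePrior hdisj, wideRangePrior, if_pos hb, mul_div_cancel_right₀ _ hne]

end WideRange

theorem stmt1_general {A : ℕ} {B : Type*} {ℐ : Finset (B × (Fin A → Fin A))} {T : ℕ}
    {S : ℕ → B → ℝ} (hS : ∀ t ∈ Icc 1 T, ∀ bψ ∈ ℐ, S t bψ.1 ∈ Set.Icc 0 1)
    {ℓ : ℕ → Fin A → ℝ} (hℓ : ∀ t ∈ Icc 1 T, ∀ a, 0 ≤ ℓ t a) {η : ℝ} (hη : 0 < η)
    {p : ℕ → Fin A → ℝ} (hp : ∀ t ∈ Icc 1 T, p t ∈ stdSimplex ℝ (Fin A))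
    {w₀ : B × (Fin A → Fin A) → ℝ} (hw₀ : ∀ bψ ∈ ℐ, 0 < w₀ bψ)
    {w : ℕ → B × (Fin A → Fin A) → ℝ}
    (hw : ∀ t bψ, w t bψ = w₀ bψ * Real.exp (η * ∑ s ∈ Icc 1 t,
      (Real.exp (-η * supNorm (ℓ s)) * S s bψ.1 * ip (p s) (ℓ s)
        - S s bψ.1 * ip (pushf bψ.2 (p s)) (ℓ s))))
    (hstat : ∀ t ∈ Icc 1 T, ∀ a, ∑ bψ ∈ ℐ, w (t - 1) bψ * S t bψ.1 * p t a
      = ∑ bψ ∈ ℐ, w (t - 1) bψ * S t bψ.1 * pushf bψ.2 (p t) a)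
    {b : B} {ψ : Fin A → Fin A} (hbψ : (b, ψ) ∈ ℐ) :
    ∑ t ∈ Icc 1 T, S t b * (ip (p t) (ℓ t) - ip (pushf ψ (p t)) (ℓ t))
      ≤ η * ∑ t ∈ Icc 1 T, supNorm (ℓ t) * S t b * ip (p t) (ℓ t)
        + Real.log ((∑ bψ ∈ ℐ, w₀ bψ) / w₀ (b, ψ)) / η := by
  obtain rfl : w = hedgeWeight η w₀ (fun t => supNorm (ℓ t)) (fun t => ip (p t) (ℓ t))
      (fun t bψ => S t bψ.1) (fun t bψ => ip (pushf bψ.2 (p t)) (ℓ t)) :=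
    funext₂ hw
  exact sum_regret_le_of_stationary hη hw₀
    (fun t ht => ip_mem_Icc_supNorm (hp t ht) (hℓ t ht))
    (fun t ht bψ _ => ip_mem_Icc_supNorm (pushf_mem_stdSimplex bψ.2 (hp t ht)) (hℓ t ht)) hS
    (fun t ht => (sum_mul_ip_sub_ip_eq_zero (hstat t ht) (ℓ t)).le) hbψ

/-- Wide-range regret bound of wide-range Hedge, external part: if the play `(p^t)`
satisfies the stationarity equations of wide-range Hedge, then for every external
time-selection index `b ∈ B^e` and every action `a`,
`∑_t S^t_b (⟨p^t, ℓ^t⟩ − ℓ^t(a))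
  ≤ η ∑_t ‖ℓ^t‖_∞ S^t_b ⟨p^t, ℓ^t⟩ + log((|B^s|+|B^e|)·A)/η`. -/
theorem stmt1
    (A : ℕ) (hA : 1 ≤ A)
    (B : Type) [Fintype B] [DecidableEq B]
    (Bs Be : Finset B) (hdisj : Disjoint Bs Be)
    (hBs : Bs.Nonempty) (hBe : Be.Nonempty)
    (ℐ : Finset (B × (Fin A → Fin A)))
    (hℐ : ℐ = Bs ×ˢ (Finset.univ : Finset (Fin A → Fin A)) ∪ Be ×ˢ PsiE A)
    (T : ℕ) (hT : 1 ≤ T)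
    (S : ℕ → B → ℝ)
    (hS : ∀ t ∈ Finset.Icc 1 T, ∀ b ∈ Bs ∪ Be, 0 ≤ S t b ∧ S t b ≤ 1)
    (ℓ : ℕ → Fin A → ℝ)
    (hℓ : ∀ t ∈ Finset.Icc 1 T, ∀ a, 0 ≤ ℓ t a)
    (η : ℝ) (hη : 0 < η)
    (p : ℕ → Fin A → ℝ)
    (hp : ∀ t ∈ Finset.Icc 1 T, (∀ a, 0 ≤ p t a) ∧ ∑ a, p t a = 1)
    (w : ℕ → B × (Fin A → Fin A) → ℝ)
    (hw : ∀ t, ∀ bψ : B × (Fin A → Fin A), w t bψ =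
      (if bψ.1 ∈ Be then (A : ℝ) ^ (A : ℕ) else (A : ℝ)) *
        Real.exp (η * ∑ s ∈ Finset.Icc 1 t,
          (Real.exp (-η * supNorm (ℓ s)) * S s bψ.1 * ip (p s) (ℓ s)
            - S s bψ.1 * ip (pushf bψ.2 (p s)) (ℓ s))))
    (hstat : ∀ t ∈ Finset.Icc 1 T, ∀ a : Fin A,
      ∑ bψ ∈ ℐ, w (t - 1) bψ * S t bψ.1 * p t a
        = ∑ bψ ∈ ℐ, w (t - 1) bψ * S t bψ.1 * pushf bψ.2 (p t) a) :
    ∀ b ∈ Be, ∀ a : Fin A,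
      ∑ t ∈ Finset.Icc 1 T, S t b * (ip (p t) (ℓ t) - ℓ t a)
        ≤ η * ∑ t ∈ Finset.Icc 1 T, supNorm (ℓ t) * S t b * ip (p t) (ℓ t)
          + Real.log (((Bs.card : ℝ) + (Be.card : ℝ)) * (A : ℝ)) / η := by
  intro b hb a
  obtain rfl : ℐ = wideRangeIndex A Bs Be := hℐ
  have hregret := stmt1_general (w₀ := fun bψ => wideRangePrior A Be bψ.1)
    (fun t ht bψ h => hS t ht bψ.1 (fst_mem_of_mem_wideRangeIndex h)) hℓ hη hp
    (fun bψ _ => wideRangePrior_pos hA Be bψ.1) hw hstat (mk_const_mem_wideRangeIndex Bs hb a)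
  rwa [sum_wideRangePrior_div hdisj hb,
    sum_congr rfl fun t ht => by rw [ip_pushf_const a (hp t ht).2 (ℓ t)]] at hregret
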